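/- arXiv:2204.06344 — 2 statements merged into one kernel-verified Lean document; each statement's English description precedes it below -/
import Mathlib

section
/- Let A and B be n×n complex matrices, let M be the 2n×2n block matrix M = [[A, B],[A, B]], and let C = A + B. Then for every nonzero complex number λ and every integer k ≥ 1, the kernel of (M − λI_{2n})^k is exactly {(u, u) : u ∈ ker (C − λI_n)^k}; in particular, dim ker (M − λI_{2n})^k = dim ker (C − λI_n)^k, so every nonzero eigenvalue of M and of C has the same algebraic multiplicity for both matrices. -/
/-!
Let `S = [1; 1]` be the diagonal embedding `u ↦ (u, u)` and `D = [1, -1]` the difference map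
`(u, w) ↦ u - w`. Then `(M - λ) S = S (C - λ)` and `D (M - λ) = -λ D`, and both relations pass to
`k`-th powers. As `λ ≠ 0`, the second forces every vector of `ker (M - λ)^k` to be diagonal, and by
the first a diagonal vector `S u` lies in this kernel iff `u ∈ ker (C - λ)^k`. Since `S` is
injective, the dimensions agree.

For the characteristic polynomials, `M = S [A, B]` and `C = [A, B] S`, so they differ only by a
power of `X`, which does not vanish at `λ`.
-/

open Matrix Polynomial in
/-- The power of `X` separating the characteristic polynomials of `P * Q` and `Q * P` does not
affect multiplicities of nonzero roots. -/
lemma rootMultiplicity_charpoly_mul_comm {m n : Type*} [Fintype m] [DecidableEq m] [Fintype n]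
    [DecidableEq n] (P : Matrix m n ℂ) (Q : Matrix n m ℂ) {lam : ℂ} (hlam : lam ≠ 0) :
    (P * Q).charpoly.rootMultiplicity lam = (Q * P).charpoly.rootMultiplicity lam := by
  have key := congrArg (rootMultiplicity lam) (Matrix.charpoly_mul_comm' P Q)
  have hX : ∀ r : ℕ, rootMultiplicity lam (X ^ r : ℂ[X]) = 0 := fun r =>
    rootMultiplicity_eq_zero (by simp [IsRoot.def, hlam])
  have hne : ∀ (r : ℕ) {p : ℂ[X]}, p.Monic → (X ^ r : ℂ[X]) * p ≠ 0 := fun r p hp =>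
    ((monic_X_pow r).mul hp).ne_zero
  rwa [rootMultiplicity_mul (hne _ (charpoly_monic _)),
    rootMultiplicity_mul (hne _ (charpoly_monic _)), hX, hX, zero_add, zero_add] at key

/-- For n×n complex matrices A, B, the block matrix M = [[A,B],[A,B]] and
C = A + B satisfy: for every nonzero λ and k ≥ 1, ker (M − λI)^k = {(u,u) : u ∈ ker (C − λI)^k},
dim ker (M − λI)^k = dim ker (C − λI)^k, and λ has the same algebraic multiplicity for M and C. -/
theorem stmt0 (n : ℕ) (A B : Matrix (Fin n) (Fin n) ℂ)
    (M : Matrix (Fin n ⊕ Fin n) (Fin n ⊕ Fin n) ℂ) (hM : M = Matrix.fromBlocks A B A B)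
    (C : Matrix (Fin n) (Fin n) ℂ) (hC : C = A + B)
    (lam : ℂ) (hlam : lam ≠ 0) (k : ℕ) (hk : 1 ≤ k) :
    ({v : Fin n ⊕ Fin n → ℂ | ((M - lam • 1) ^ k).mulVec v = 0} =
      {v : Fin n ⊕ Fin n → ℂ | ∃ u : Fin n → ℂ,
        ((C - lam • 1) ^ k).mulVec u = 0 ∧ v = Sum.elim u u}) ∧
    Module.finrank ℂ (LinearMap.ker ((M - lam • 1) ^ k).mulVecLin) =
      Module.finrank ℂ (LinearMap.ker ((C - lam • 1) ^ k).mulVecLin) ∧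
    M.charpoly.rootMultiplicity lam = C.charpoly.rootMultiplicity lam := by
  let S : Matrix (Fin n ⊕ Fin n) (Fin n) ℂ := Matrix.fromRows 1 1
  let D : Matrix (Fin n) (Fin n ⊕ Fin n) ℂ := Matrix.fromCols 1 (-1)
  let Q : Matrix (Fin n) (Fin n ⊕ Fin n) ℂ := Matrix.fromCols A B
  have hSQ : M = S * Q := by
    simp [S, Q, hM]
  have hQS : C = Q * S := by
    simp [S, Q, hC, Matrix.fromCols_mul_fromRows]
  have hDS : D * S = 0 := by
    simp [S, D, Matrix.fromCols_mul_fromRows]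
  have hS : ∀ u : Fin n → ℂ, S.mulVec u = Sum.elim u u := fun u => by
    simp [S, Matrix.fromRows_mulVec]
  have hSinj : Function.Injective S.mulVecLin := fun u w h => by
    rw [Matrix.mulVecLin_apply, Matrix.mulVecLin_apply, hS, hS] at h
    exact funext fun i => congrFun h (Sum.inl i)
  have hMS : ∀ j : ℕ, (M - lam • 1) ^ j * S = S * (C - lam • 1) ^ j := fun j => by
    induction j with
    | zero => simp
    | succ j ih =>
      rw [pow_succ, pow_succ', Matrix.mul_assoc,
        show (M - lam • 1) * S = S * (C - lam • 1) by
          rw [hSQ, hQS]; simp [Matrix.sub_mul, Matrix.mul_sub, Matrix.mul_assoc],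
        ← Matrix.mul_assoc, ih, Matrix.mul_assoc, ← pow_succ, ← pow_succ']
  have hDM : ∀ j : ℕ, D * (M - lam • 1) ^ j = (-lam) ^ j • D := fun j => by
    induction j with
    | zero => simp
    | succ j ih =>
      rw [pow_succ, ← Matrix.mul_assoc, ih, Matrix.smul_mul, Matrix.mul_sub, hSQ,
        ← Matrix.mul_assoc, hDS, pow_succ, mul_smul]
      simp
  have hker : ∀ v : Fin n ⊕ Fin n → ℂ, ((M - lam • 1) ^ k).mulVec v = 0 ↔
      ∃ u : Fin n → ℂ, ((C - lam • 1) ^ k).mulVec u = 0 ∧ v = Sum.elim u u := fun v => by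
    have hdiag : ∀ u : Fin n → ℂ, ((M - lam • 1) ^ k).mulVec (Sum.elim u u) =
        S.mulVec (((C - lam • 1) ^ k).mulVec u) := fun u => by
      rw [← hS, Matrix.mulVec_mulVec, hMS, Matrix.mulVec_mulVec]
    constructor
    · intro hv
      have hDv : (-lam) ^ k • D.mulVec v = 0 := by
        rw [← Matrix.smul_mulVec, ← hDM, ← Matrix.mulVec_mulVec, hv, Matrix.mulVec_zero]
      have hDv' := (smul_eq_zero.mp hDv).resolve_left (pow_ne_zero _ (neg_ne_zero.mpr hlam))
      have hveq : v = Sum.elim (v ∘ Sum.inl) (v ∘ Sum.inl) := by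
        funext i
        rcases i with i | i
        · rfl
        · have := congrFun hDv' i
          simp [D, Matrix.fromCols_mulVec, Matrix.neg_mulVec] at this
          simp only [Sum.elim_inr, Function.comp_apply]
          linear_combination -this
      refine ⟨v ∘ Sum.inl, hSinj ?_, hveq⟩
      rw [hveq, hdiag] at hv
      simpa using hv
    · rintro ⟨u, hu, rfl⟩
      rw [hdiag, hu, Matrix.mulVec_zero]
  refine ⟨Set.ext hker, ?_, ?_⟩
  · have hmap : LinearMap.ker ((M - lam • 1) ^ k).mulVecLin =
        (LinearMap.ker ((C - lam • 1) ^ k).mulVecLin).map S.mulVecLin := by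
      ext v
      simp only [LinearMap.mem_ker, Submodule.mem_map, Matrix.mulVecLin_apply, hker, hS, eq_comm]
    rw [hmap]
    exact (Submodule.equivMapOfInjective S.mulVecLin hSinj _).finrank_eq.symm
  · rw [hSQ, hQS]
    exact rootMultiplicity_charpoly_mul_comm S Q hlam
end

section
/- Let n ≥ 2, let s be an integer with 1 ≤ s ≤ n−1, and let B = (b(i,j)) be an n×n row stochastic matrix (indices 1 ≤ i, j ≤ n) such that b(i,j) > 0 whenever either i ≤ j ≤ min(i+n−s, n) or j+s ≤ i. Then for every integer k ≥ 1, the (i,j) entry of B^k is strictly positive for all pairs (i,j) satisfying either i ≤ j ≤ min(i + k(n−s), n) or j + ks ≤ i. -/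
/-!
Induction on `k`. Since `B` is entrywise nonnegative, `B ^ (k + 1)` is positive at `(i, j)` as soon
as some intermediate index `l` has `(B ^ k) i l > 0` and `B l j > 0`. For
`i ≤ j ≤ i + (k + 1) (n - s)` the choice `l = max i (j - (n - s))` works, and for
`j + (k + 1) s ≤ i` the choice `l = j + s` works.
-/

lemma pow_succ_apply_pos {n : ℕ} {B : Matrix (Fin n) (Fin n) ℝ}
    (hB : ∀ i j, 0 ≤ B i j) {k : ℕ} {i j : Fin n} (l : Fin n)
    (h₁ : 0 < (B ^ k) i l) (h₂ : 0 < B l j) : 0 < (B ^ (k + 1)) i j := by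
  have hBk : ∀ m : ℕ, ∀ a b, 0 ≤ (B ^ m) a b := by
    intro m
    induction m with
    | zero =>
      intro a b
      rw [pow_zero, Matrix.one_apply]
      split_ifs <;> norm_num
    | succ m ih =>
      intro a b
      rw [pow_succ, Matrix.mul_apply]
      exact Finset.sum_nonneg fun c _ => mul_nonneg (ih a c) (hB c b)
  rw [pow_succ, Matrix.mul_apply]
  exact Finset.sum_pos' (fun c _ => mul_nonneg (hBk k i c) (hB c j))
    ⟨l, Finset.mem_univ l, mul_pos h₁ h₂⟩

/-- If B is an n×n row stochastic matrix (n ≥ 2, 1 ≤ s ≤ n−1) with b(i,j) > 0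
whenever i ≤ j ≤ min(i+n−s, n) or j+s ≤ i (1-based), then for every k ≥ 1 the (i,j) entry of
B^k is positive whenever i ≤ j ≤ min(i+k(n−s), n) or j+ks ≤ i.  (0-based indices here.) -/
theorem stmt3 (n s : ℕ) (hn : 2 ≤ n) (hs1 : 1 ≤ s) (hs2 : s ≤ n - 1)
    (B : Matrix (Fin n) (Fin n) ℝ)
    (hnonneg : ∀ i j, 0 ≤ B i j) (hrow : ∀ i, ∑ j, B i j = 1)
    (hpos : ∀ i j : Fin n,
      ((i : ℕ) ≤ (j : ℕ) ∧ (j : ℕ) ≤ min ((i : ℕ) + (n - s)) (n - 1)) ∨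
        (j : ℕ) + s ≤ (i : ℕ) → 0 < B i j)
    (k : ℕ) (hk : 1 ≤ k) :
    ∀ i j : Fin n,
      ((i : ℕ) ≤ (j : ℕ) ∧ (j : ℕ) ≤ min ((i : ℕ) + k * (n - s)) (n - 1)) ∨
        (j : ℕ) + k * s ≤ (i : ℕ) → 0 < (B ^ k) i j := by
  -- The base case is `k = 1`: for `k = 0` the second alternative reads `j ≤ i` and the claim fails.
  induction k, hk using Nat.le_induction with
  | base =>
    intro i j h
    rw [pow_one]
    exact hpos i j (by simpa only [one_mul] using h)
  | succ k hk ih =>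
    rintro i j (⟨hij, hj⟩ | hj)
    · rw [add_mul, one_mul] at hj
      have hi := i.isLt
      have hjn := j.isLt
      have hl : max (i : ℕ) (j - (n - s)) < n := by omega
      refine pow_succ_apply_pos hnonneg ⟨_, hl⟩ (ih _ _ (Or.inl ?_)) (hpos _ _ (Or.inl ?_))
      · dsimp only
        omega
      · dsimp only
        omega
    · rw [add_mul, one_mul] at hj
      have hi := i.isLt
      have hl : (j : ℕ) + s < n := by omega
      refine pow_succ_apply_pos hnonneg ⟨_, hl⟩ (ih _ _ (Or.inr ?_)) (hpos _ _ (Or.inr ?_))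
      · dsimp only
        omega
      · exact le_rfl
end
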